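/- Let (J, B) be a pseudo-euclidean Jordan algebra over a field K of characteristic zero which is not the one-dimensional algebra with zero product, and suppose there exists b ∈ Ann(J) with b ≠ 0 and B(b, b) = 0. Then there exists a ∈ J with B(a, a) = 0 and B(a, b) = 1 such that, setting W = {x ∈ J : B(x, a) = B(x, b) = 0}: J = Ka ⊕ W ⊕ Kb as vector spaces; the restriction B_W of B to W × W is nondegenerate; for x, y ∈ W one has xy ∈ W ⊕ Kb, and writing xy = β(x, y) + α(x, y)b with β(x, y) ∈ W and α(x, y) ∈ K, the product β makes W a Jordan algebra; and there exist a B_W-symmetric endomorphism D of W, x₀ ∈ W and k ∈ K such that α(x, y) = B_W(D(x), y), ax = D(x) + B_W(x₀, x)b for all x, y ∈ W, a² = x₀ + kb, and (D, x₀) is an admissible pair of the Jordan algebra (W, β). In other words, (J, B) is the generalized double extension of the pseudo-euclidean Jordan algebra (W, B_W) by the one-dimensional algebra with zero product. -/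

import Mathlib

/-- In a space with a symmetric bilinear form, a hyperbolic pair `a`, `b` splits off:
`V = Ka ⊕ {a, b}ᗮ ⊕ Kb`. -/
theorem isInternal_hyperbolic_pair
    {K V : Type*} [Field K] [AddCommGroup V] [Module K V] (B : V →ₗ[K] V →ₗ[K] K)
    {a b : V} (haa : B a a = 0) (hab : B a b = 1) (hba : B b a = 1) (hbb : B b b = 0) :
    DirectSum.IsInternal ![Submodule.span K {a},
      LinearMap.ker (B.flip a) ⊓ LinearMap.ker (B.flip b), Submodule.span K {b}] := by
  rw [DirectSum.isInternal_submodule_iff_iSupIndep_and_iSup_eq_top]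
  constructor
  · intro i
    fin_cases i
    · refine Disjoint.mono_right (c := LinearMap.ker (B.flip b)) ?_ ?_
      · refine iSup₂_le fun j hj => ?_
        fin_cases j
        · exact absurd rfl hj
        · exact inf_le_right
        · simp [hbb]
      · rw [Submodule.disjoint_def]
        intro x hx hx'
        obtain ⟨c, rfl⟩ := Submodule.mem_span_singleton.1 hx
        have hc : c = 0 := by simpa [hab] using hx'
        simp [hc]
    · refine Disjoint.mono_right (c := Submodule.span K {a} ⊔ Submodule.span K {b}) ?_ ?_
      · refine iSup₂_le fun j hj => ?_
        fin_cases j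
        · exact le_sup_left
        · exact absurd rfl hj
        · exact le_sup_right
      · rw [Submodule.disjoint_def]
        intro x hx hx'
        obtain ⟨y, hy, z, hz, rfl⟩ := Submodule.mem_sup.1 hx'
        obtain ⟨c, rfl⟩ := Submodule.mem_span_singleton.1 hy
        obtain ⟨d, rfl⟩ := Submodule.mem_span_singleton.1 hz
        have h : d = 0 ∧ c = 0 := by simpa [haa, hab, hba, hbb] using hx
        simp [h.1, h.2]
    · refine Disjoint.mono_right (c := LinearMap.ker (B.flip a)) ?_ ?_
      · refine iSup₂_le fun j hj => ?_
        fin_cases j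
        · simp [haa]
        · exact inf_le_left
        · exact absurd rfl hj
      · rw [Submodule.disjoint_def]
        intro x hx hx'
        obtain ⟨c, rfl⟩ := Submodule.mem_span_singleton.1 hx
        have hc : c = 0 := by simpa [hba] using hx'
        simp [hc]
  · rw [eq_top_iff]
    intro x _
    have hx : x = B x b • a + (x - B x b • a - B x a • b) + B x a • b := by abel
    rw [hx]
    refine add_mem (add_mem ?_ ?_) ?_
    · exact Submodule.mem_iSup_of_mem (0 : Fin 3)
        (Submodule.smul_mem _ _ (Submodule.mem_span_singleton_self a))
    · refine Submodule.mem_iSup_of_mem (1 : Fin 3) ?_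
      change _ ∈ LinearMap.ker (B.flip a) ⊓ LinearMap.ker (B.flip b)
      simp [haa, hab, hba, hbb]
    · exact Submodule.mem_iSup_of_mem (2 : Fin 3)
        (Submodule.smul_mem _ _ (Submodule.mem_span_singleton_self b))

/-- A nonzero isotropic vector of a nondegenerate symmetric bilinear form is part of a
hyperbolic pair. -/
theorem exists_hyperbolic_pair
    {K V : Type*} [Field K] [CharZero K] [AddCommGroup V] [Module K V]
    (B : V →ₗ[K] V →ₗ[K] K) (hsymm : ∀ x y : V, B x y = B y x)
    (hnondeg : ∀ x : V, (∀ y : V, B x y = 0) → x = 0)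
    {b : V} (hbne : b ≠ 0) (hbb : B b b = 0) :
    ∃ a : V, B a a = 0 ∧ B a b = 1 := by
  obtain ⟨y, hy⟩ : ∃ y, B b y ≠ 0 := by
    by_contra! h
    exact hbne (hnondeg b h)
  obtain ⟨c, hcb⟩ : ∃ c, B c b = 1 :=
    ⟨(B b y)⁻¹ • y, by rw [map_smul, LinearMap.smul_apply, smul_eq_mul, hsymm y b,
      inv_mul_cancel₀ hy]⟩
  have hbc : B b c = 1 := hsymm b c ▸ hcb
  refine ⟨c - (B c c / 2) • b, ?_, ?_⟩
  · simp [hcb, hbc, hbb, sub_sub]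
  · simp [hcb, hbb]

/-- The Jordan identity, linearized once. -/
theorem jordan_linearized
    {K J : Type*} [Field K] [CharZero K] [NonUnitalNonAssocCommRing J] [Module K J]
    (hjordan : ∀ x y : J, (x * y) * (x * x) = x * (y * (x * x))) (a x y : J) :
    a * (x * x * y) = x * x * (a * y) + 2 • (a * x * (x * y)) - 2 • (x * (a * x * y)) := by
  have h1 := hjordan (x + a) y
  have h2 := hjordan (x - a) y
  have h3 := hjordan a y
  simp only [mul_add, add_mul, mul_sub, mul_comm] at h1 h2 h3 ⊢
  linear_combination (norm := module) (1 / 2 : K) • h2 - (1 / 2 : K) • h1 + h3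

/-- a pseudo-euclidean Jordan algebra `(J, B)` which is not the one-dimensional
algebra with zero product and possesses a nonzero isotropic annihilator element `b` is a
generalized double extension of a pseudo-euclidean Jordan algebra `(W, B_W)` by the
one-dimensional algebra with zero product. -/
theorem generalized_double_extension_of_isotropic_ann
    {K : Type*} [Field K] [CharZero K]
    {J : Type*} [NonUnitalNonAssocCommRing J] [Module K J]
    [SMulCommClass K J J] [IsScalarTower K J J] [FiniteDimensional K J]
    (hjordan : ∀ x y : J, (x * y) * (x * x) = x * (y * (x * x)))
    (B : J →ₗ[K] J →ₗ[K] K)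
    (hsymm : ∀ x y : J, B x y = B y x)
    (hnondeg : ∀ x : J, (∀ y : J, B x y = 0) → x = 0)
    (hassoc : ∀ x y z : J, B (x * y) z = B x (y * z))
    (hnotone : ¬ (Module.finrank K J = 1 ∧ ∀ x y : J, x * y = 0))
    (b : J) (hbann : ∀ y : J, b * y = 0) (hbne : b ≠ 0) (hbb : B b b = 0) :
    ∃ a : J, B a a = 0 ∧ B a b = 1 ∧
      -- `W := {x | B x a = 0 ∧ B x b = 0}`
      (let W : Submodule K J := LinearMap.ker (B.flip a) ⊓ LinearMap.ker (B.flip b);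
        -- `J = Ka ⊕ W ⊕ Kb`
        DirectSum.IsInternal ![Submodule.span K {a}, W, Submodule.span K {b}] ∧
        -- `B_W := B|_{W × W}` is nondegenerate
        (∀ x ∈ W, (∀ y ∈ W, B x y = 0) → x = 0) ∧
        -- the generalized double extension structure
        ∃ (β : J → J → J) (D : J → J) (x₀ : J) (k : K),
          x₀ ∈ W ∧
          -- `β` takes values in `W` and `xy = β(x,y) + B_W(Dx, y)·b` for `x, y ∈ W`
          (∀ x ∈ W, ∀ y ∈ W, β x y ∈ W) ∧
          (∀ x ∈ W, ∀ y ∈ W, x * y = β x y + B (D x) y • b) ∧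
          -- `β` is bilinear on `W` (so it is an algebra product on `W`)
          (∀ x ∈ W, ∀ x' ∈ W, ∀ y ∈ W, β (x + x') y = β x y + β x' y) ∧
          (∀ (c : K), ∀ x ∈ W, ∀ y ∈ W, β (c • x) y = c • β x y) ∧
          (∀ x ∈ W, ∀ y ∈ W, ∀ y' ∈ W, β x (y + y') = β x y + β x y') ∧
          (∀ (c : K), ∀ x ∈ W, ∀ y ∈ W, β x (c • y) = c • β x y) ∧
          -- `β` makes `W` a Jordan algebra
          (∀ x ∈ W, ∀ y ∈ W, β x y = β y x) ∧
          (∀ x ∈ W, ∀ y ∈ W, β (β x y) (β x x) = β x (β y (β x x))) ∧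
          -- `D` is a `B_W`-symmetric endomorphism of `W`
          (∀ x ∈ W, D x ∈ W) ∧
          (∀ x ∈ W, ∀ y ∈ W, D (x + y) = D x + D y) ∧
          (∀ (c : K), ∀ x ∈ W, D (c • x) = c • D x) ∧
          (∀ x ∈ W, ∀ y ∈ W, B (D x) y = B x (D y)) ∧
          -- `a x = Dx + B_W(x₀, x)·b` and `a² = x₀ + k·b`
          (∀ x ∈ W, a * x = D x + B x₀ x • b) ∧
          a * a = x₀ + k • b ∧
          -- `(D, x₀)` is an admissible pair of `(W, β)`: (C1)–(C7)
          (∀ x ∈ W, ∀ y ∈ W, D (β (β x x) y) =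
            β (β x x) (D y) + 2 • β (D x) (β x y) - 2 • β x (β (D x) y)) ∧
          (∀ x ∈ W, ∀ y ∈ W, β (D x) (D y) - D (β (D x) y) =
            ((1 : K) / 2) • (β (β x₀ y) x - β x₀ (β y x))) ∧
          (∀ x ∈ W, D (β x₀ x) = β x₀ (D x)) ∧
          (∀ x ∈ W, β x (D (β x x)) = β (β x x) (D x)) ∧
          (∀ x ∈ W, D (D (β x x)) =
            2 • β (D x) (D x) - 2 • β x (D (D x)) + β x₀ (β x x)) ∧
          (∀ x ∈ W, D (D (D x)) =
            ((3 : K) / 2) • β x₀ (D x) - ((1 : K) / 2) • β x (D x₀)) ∧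
          D (D x₀) = β x₀ x₀) := by
  obtain ⟨a, haa, hab⟩ := exists_hyperbolic_pair B hsymm hnondeg hbne hbb
  have hba : B b a = 1 := hsymm b a ▸ hab
  have hint := isInternal_hyperbolic_pair B haa hab hba hbb
  have hbann' : ∀ y : J, y * b = 0 := fun y => by rw [mul_comm, hbann]
  have hmulb : ∀ x y : J, B (x * y) b = 0 := fun x y => by rw [hassoc, hbann', map_zero]
  have hlin := jordan_linearized (K := K) hjordan
  -- the projection along `b` onto the orthogonal complement of `a`
  obtain ⟨p, hp⟩ : ∃ p : J →ₗ[K] J, ∀ u, p u = u - B u a • b :=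
    ⟨LinearMap.id - (B.flip a).smulRight b, fun u => by simp⟩
  have hpmul : ∀ u v : J, p u * v = u * v := fun u v => by
    rw [hp, sub_mul, smul_mul_assoc, hbann, smul_zero, sub_zero]
  have hmulp : ∀ u v : J, u * p v = u * v := fun u v => by
    rw [mul_comm, hpmul, mul_comm]
  have hBp : ∀ u y : J, B y b = 0 → B (p u) y = B u y := fun u y hy => by
    simp [hp, hsymm b y, hy]
  refine ⟨a, haa, hab, ?_⟩
  intro W
  have hW : ∀ x, x ∈ W ↔ B x a = 0 ∧ B x b = 0 := fun x => by simp [W]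
  have hpW : ∀ x y : J, p (x * y) ∈ W := fun x y => by
    simp [hW, hp, hba, hbb, hmulb]
  refine ⟨hint, ?_, fun x y => p (x * y), fun x => p (a * x), p (a * a), B (a * a) a,
    hpW _ _, fun x _ y _ => hpW _ _, ?_, ?_, ?_, ?_, ?_, ?_, ?_, fun x _ => hpW _ _, ?_, ?_, ?_,
    ?_, ?_, ?_, ?_, ?_, ?_, ?_, ?_, ?_⟩ <;> beta_reduce
  · intro x hx h
    obtain ⟨hxa, hxb⟩ := (hW x).1 hx
    refine hnondeg x fun y => ?_
    have hy := h (y - B y b • a - B y a • b) ((hW _).2 (by simp [haa, hab, hba, hbb]))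
    simpa [hxa, hxb] using hy
  · intro x _ y hy
    rw [hBp _ _ ((hW y).1 hy).2, hassoc, hsymm a, hp]
    abel
  · intro x _ x' _ y _
    rw [add_mul, map_add]
  · intro c x _ y _
    rw [smul_mul_assoc, map_smul]
  · intro x _ y _ y' _
    rw [mul_add, map_add]
  · intro c x _ y _
    rw [mul_smul_comm, map_smul]
  · intro x _ y _
    rw [mul_comm]
  · intro x _ y _
    simp only [hpmul, hmulp, hjordan]
  · intro x _ y _
    rw [mul_add, map_add]
  · intro c x _
    rw [mul_smul_comm, map_smul]
  · intro x hx y hy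
    rw [hBp _ _ ((hW y).1 hy).2, hsymm x, hBp _ _ ((hW x).1 hx).2, hassoc, hassoc, mul_comm]
  · intro x hx
    rw [hBp _ _ ((hW x).1 hx).2, hassoc, hsymm a, hp]
    abel
  · rw [hp]
    abel
  · intro x _ y _
    simp only [hpmul, hmulp, ← map_nsmul, ← map_add, ← map_sub]
    rw [hlin]
  · intro x _ y _
    simp only [hpmul, hmulp, ← map_smul, ← map_sub]
    congr 1
    have h := hlin x a y
    simp only [mul_comm] at h ⊢
    linear_combination (norm := module) (-1 / 2 : K) • h
  · intro x _
    simp only [hpmul, hmulp]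
    rw [mul_comm (a * a) x, ← hjordan, mul_comm]
  · intro x _
    simp only [hpmul, hmulp]
    rw [← hjordan, mul_comm, mul_comm x a]
  · intro x _
    simp only [hpmul, hmulp, ← map_nsmul, ← map_add, ← map_sub]
    congr 1
    have h := hlin a x a
    simp only [mul_comm] at h ⊢
    linear_combination (norm := module) h
  · intro x _
    simp only [hpmul, hmulp, ← map_smul, ← map_sub]
    congr 1
    have h := hlin x a a
    simp only [mul_comm] at h ⊢
    linear_combination (norm := module) (1 / 2 : K) • h
  · simp only [hpmul, hmulp]
    rw [← hjordan]
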